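/- arXiv:math/0402131 — 3 statements merged into one kernel-verified Lean document; each statement's English description precedes it below -/
import Mathlib

section
/- Let V be the 2-dimensional ℚ-vector space with basis {v₊, v₋}, and define ℚ-linear maps m' : V ⊗ V → V, Δ' : V → V ⊗ V, ι' : ℚ → V, ε' : V → ℚ by m'(v₊⊗v₊) = m'(v₋⊗v₋) = v₊, m'(v₊⊗v₋) = m'(v₋⊗v₊) = v₋, Δ'(v₊) = v₊⊗v₋ + v₋⊗v₊, Δ'(v₋) = v₋⊗v₋ + v₊⊗v₊, ι'(1) = v₊, ε'(v₊) = 0, ε'(v₋) = 1. Then (V, m', ι', Δ', ε') is a commutative Frobenius algebra over ℚ: m' is associative and commutative with unit v₊ = ι'(1); Δ' is coassociative and cocommutative with counit ε' (i.e. (ε'⊗id)∘Δ' = id = (id⊗ε')∘Δ'); and the Frobenius identity Δ'∘m' = (m'⊗id)∘(id⊗Δ') = (id⊗m')∘(Δ'⊗id) holds. -/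
/-!
Lee's deformation of Khovanov's TQFT: the vector space `V = ℚ²` assigned to a
circle, with basis `v₊ = (1,0)`, `v₋ = (0,1)`, together with Lee's structure
maps `m'`, `Δ'`, `ι'`, `ε'`, forms a commutative Frobenius algebra over ℚ.
-/

open TensorProduct

/-- The underlying vector space of Lee's TQFT: a 2-dimensional ℚ-vector space. -/
abbrev V : Type := ℚ × ℚ

/-- The basis vector `v₊`. -/
def vp : V := (1, 0)

/-- The basis vector `v₋`. -/
def vm : V := (0, 1)

theorem lee_TQFT_is_commutative_frobenius
    (m' : V ⊗[ℚ] V →ₗ[ℚ] V) (Δ' : V →ₗ[ℚ] V ⊗[ℚ] V)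
    (ι' : ℚ →ₗ[ℚ] V) (ε' : V →ₗ[ℚ] ℚ)
    (hm1 : m' (vp ⊗ₜ vp) = vp) (hm2 : m' (vm ⊗ₜ vm) = vp)
    (hm3 : m' (vp ⊗ₜ vm) = vm) (hm4 : m' (vm ⊗ₜ vp) = vm)
    (hΔ1 : Δ' vp = vp ⊗ₜ vm + vm ⊗ₜ vp)
    (hΔ2 : Δ' vm = vm ⊗ₜ vm + vp ⊗ₜ vp)
    (hι : ι' 1 = vp) (hε1 : ε' vp = 0) (hε2 : ε' vm = 1) :
    -- `m'` is associative
    (∀ x y z : V, m' (m' (x ⊗ₜ y) ⊗ₜ z) = m' (x ⊗ₜ m' (y ⊗ₜ z))) ∧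
    -- `m'` is commutative
    (∀ x y : V, m' (x ⊗ₜ y) = m' (y ⊗ₜ x)) ∧
    -- `v₊ = ι'(1)` is a (two-sided) unit for `m'`
    (∀ x : V, m' (ι' 1 ⊗ₜ x) = x ∧ m' (x ⊗ₜ ι' 1) = x) ∧
    -- `Δ'` is coassociative
    (∀ x : V, (TensorProduct.assoc ℚ V V V)
        (TensorProduct.map Δ' LinearMap.id (Δ' x))
        = TensorProduct.map LinearMap.id Δ' (Δ' x)) ∧
    -- `Δ'` is cocommutative
    (∀ x : V, (TensorProduct.comm ℚ V V) (Δ' x) = Δ' x) ∧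
    -- `ε'` is a counit for `Δ'`: `(ε'⊗id)∘Δ' = id = (id⊗ε')∘Δ'`
    (∀ x : V,
      (TensorProduct.lid ℚ V) (TensorProduct.map ε' LinearMap.id (Δ' x)) = x ∧
      (TensorProduct.rid ℚ V) (TensorProduct.map LinearMap.id ε' (Δ' x)) = x) ∧
    -- the Frobenius identity `Δ'∘m' = (m'⊗id)∘(id⊗Δ') = (id⊗m')∘(Δ'⊗id)`
    (∀ x y : V,
      Δ' (m' (x ⊗ₜ y))
        = TensorProduct.map m' LinearMap.id
            ((TensorProduct.assoc ℚ V V V).symm (x ⊗ₜ Δ' y)) ∧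
      Δ' (m' (x ⊗ₜ y))
        = TensorProduct.map LinearMap.id m'
            ((TensorProduct.assoc ℚ V V V) (Δ' x ⊗ₜ y))) := by
  have key : ∀ x : V, ∃ a b : ℚ, x = a • vp + b • vm := fun x =>
    ⟨x.1, x.2, by ext <;> simp [vp, vm]⟩
  refine ⟨?_, ?_, ?_, ?_, ?_, ?_, ?_⟩
  · intro x y z
    obtain ⟨a, b, rfl⟩ := key x
    obtain ⟨c, d, rfl⟩ := key y
    obtain ⟨e, f, rfl⟩ := key z
    simp only [tmul_add, add_tmul, tmul_smul, ← smul_tmul', map_add, map_smul, hm1, hm2, hm3, hm4]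
    try module
  · intro x y
    obtain ⟨a, b, rfl⟩ := key x
    obtain ⟨c, d, rfl⟩ := key y
    simp only [tmul_add, add_tmul, tmul_smul, ← smul_tmul', map_add, map_smul, hm1, hm2, hm3, hm4]
    module
  · intro x
    obtain ⟨a, b, rfl⟩ := key x
    simp only [hι, tmul_add, add_tmul, tmul_smul, ← smul_tmul', map_add, map_smul, hm1, hm2, hm3,
      hm4, and_self]
  · intro x
    obtain ⟨a, b, rfl⟩ := key x
    simp only [tmul_add, add_tmul, map_add, map_smul, hΔ1, hΔ2, map_tmul, LinearMap.id_apply,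
      assoc_tmul]
    module
  · intro x
    obtain ⟨a, b, rfl⟩ := key x
    simp only [map_add, map_smul, hΔ1, hΔ2, comm_tmul]
    module
  · intro x
    obtain ⟨a, b, rfl⟩ := key x
    simp only [map_add, map_smul, hΔ1, hΔ2, map_tmul, LinearMap.id_apply, hε1, hε2, lid_tmul,
      rid_tmul]
    constructor <;> module
  · intro x y
    obtain ⟨a, b, rfl⟩ := key x
    obtain ⟨c, d, rfl⟩ := key y
    simp only [tmul_add, add_tmul, tmul_smul, ← smul_tmul', map_add, map_smul, hm1, hm2, hm3, hm4,
      hΔ1, hΔ2, assoc_tmul, assoc_symm_tmul, map_tmul, LinearMap.id_apply]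
    constructor <;> module
end

section
/- Let V be the 2-dimensional ℚ-vector space with basis {v₊, v₋}, and define ℚ-linear maps m' : V ⊗ V → V, Δ' : V → V ⊗ V, ι' : ℚ → V, ε' : V → ℚ by m'(v₊⊗v₊) = m'(v₋⊗v₋) = v₊, m'(v₊⊗v₋) = m'(v₋⊗v₊) = v₋, Δ'(v₊) = v₊⊗v₋ + v₋⊗v₊, Δ'(v₋) = v₋⊗v₋ + v₊⊗v₊, ι'(1) = v₊, ε'(v₊) = 0, ε'(v₋) = 1. Set α = v₋ + v₊ and β = v₋ − v₊. Then {α, β} is a basis of V, and with respect to this basis the structure maps diagonalize: m'(α⊗α) = 2α, m'(β⊗β) = −2β, m'(α⊗β) = m'(β⊗α) = 0, Δ'(α) = α⊗α, Δ'(β) = β⊗β, ε'(α) = ε'(β) = 1, and ι'(1) = (α−β)/2. -/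
/-!
Lee's basis `{α, β}` (with `α = v₋ + v₊`, `β = v₋ − v₊`) for the vector space
`V = ℚ²` of Lee's TQFT, in which the structure maps `m'`, `Δ'`, `ι'`, `ε'`
diagonalize.
-/

open TensorProduct

/-- Lee's element `α = v₋ + v₊`. -/
def av : V := vm + vp

/-- Lee's element `β = v₋ − v₊`. -/
def bv : V := vm - vp

theorem lee_basis_diagonalizes
    (m' : V ⊗[ℚ] V →ₗ[ℚ] V) (Δ' : V →ₗ[ℚ] V ⊗[ℚ] V)
    (ι' : ℚ →ₗ[ℚ] V) (ε' : V →ₗ[ℚ] ℚ)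
    (hm1 : m' (vp ⊗ₜ vp) = vp) (hm2 : m' (vm ⊗ₜ vm) = vp)
    (hm3 : m' (vp ⊗ₜ vm) = vm) (hm4 : m' (vm ⊗ₜ vp) = vm)
    (hΔ1 : Δ' vp = vp ⊗ₜ vm + vm ⊗ₜ vp)
    (hΔ2 : Δ' vm = vm ⊗ₜ vm + vp ⊗ₜ vp)
    (hι : ι' 1 = vp) (hε1 : ε' vp = 0) (hε2 : ε' vm = 1) :
    -- `{α, β}` is a basis of `V`
    (LinearIndependent ℚ ![av, bv] ∧ Submodule.span ℚ {av, bv} = ⊤) ∧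
    -- the multiplication diagonalizes
    m' (av ⊗ₜ av) = (2 : ℚ) • av ∧
    m' (bv ⊗ₜ bv) = (-2 : ℚ) • bv ∧
    m' (av ⊗ₜ bv) = 0 ∧
    m' (bv ⊗ₜ av) = 0 ∧
    -- the comultiplication diagonalizes
    Δ' av = av ⊗ₜ av ∧
    Δ' bv = bv ⊗ₜ bv ∧
    -- counit and unit in the new basis
    ε' av = 1 ∧
    ε' bv = 1 ∧
    ι' 1 = (2 : ℚ)⁻¹ • (av - bv) := by
  refine ⟨⟨?_, ?_⟩, ?_, ?_, ?_, ?_, ?_, ?_, ?_, ?_, ?_⟩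
  · rw [LinearIndependent.pair_iff]
    intro s t h
    have h1 := congrArg Prod.fst h
    have h2 := congrArg Prod.snd h
    simp [av, bv, vp, vm] at h1 h2
    constructor <;> linarith
  · rw [eq_top_iff]
    rintro ⟨x, y⟩ -
    rw [Submodule.mem_span_pair]
    refine ⟨(x + y) / 2, (y - x) / 2, ?_⟩
    ext <;> simp [av, bv, vp, vm] <;> ring
  · simp only [av, TensorProduct.add_tmul, TensorProduct.tmul_add, map_add, hm1, hm2, hm3, hm4]
    module
  · simp only [bv, TensorProduct.sub_tmul, TensorProduct.tmul_sub, map_sub, hm1, hm2, hm3, hm4]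
    module
  · simp only [av, bv, TensorProduct.add_tmul, TensorProduct.tmul_sub, map_add, map_sub,
      hm1, hm2, hm3, hm4]
    module
  · simp only [av, bv, TensorProduct.sub_tmul, TensorProduct.tmul_add, map_add, map_sub,
      hm1, hm2, hm3, hm4]
    module
  · simp only [av, TensorProduct.add_tmul, TensorProduct.tmul_add, map_add, hΔ1, hΔ2]
    abel
  · simp only [bv, TensorProduct.sub_tmul, TensorProduct.tmul_sub, map_sub, hΔ1, hΔ2]
    abel
  · simp [av, hε1, hε2]
  · simp [bv, hε1, hε2]
  · rw [hι, av, bv]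
    module
end

section
/- Let C be a cochain complex of finite-dimensional ℚ-vector spaces, nonzero in only finitely many degrees, with a finite decreasing filtration by subcomplexes C = F_m ⊇ F_{m+1} ⊇ ⋯ ⊇ F_M = 0. Let C* be the dual complex (whose space in degree n is the dual of the space of C in degree −n, with differential the transpose of the differential of C), and filter C* by the subspaces G_j := { φ ∈ C* : φ vanishes on F_{1−j} }. Then: (1) each G_j is a subcomplex of C*, and G_{1−m} ⊇ G_{2−m} ⊇ ⋯ is a finite decreasing filtration of C* with largest term C* and smallest term 0; (2) denoting by S_i ⊆ H(C) and T_j ⊆ H(C*) the induced filtrations on cohomology (classes with a representative in F_i, respectively G_j), for every integer i and every degree the associated graded piece T_{−i}/T_{−i+1} of H(C*) is isomorphic as a ℚ-vector space to the dual of the associated graded piece S_i/S_{i+1} of H(C) (in the corresponding dual degree). -/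
/-!
The dual of a finitely filtered cochain complex of finite-dimensional ℚ-vector
spaces: the annihilator filtration `G_j = (F_{1-j})^⊥` is a finite decreasing
filtration of the dual complex by subcomplexes, and the associated graded
pieces of the induced filtration on the cohomology of the dual complex are the
duals of the associated graded pieces of the induced filtration on the
cohomology of the original complex.
-/

noncomputable section

/-- A cochain complex of ℚ-vector spaces (differential of degree `+1`) equipped
with a decreasing filtration by subcomplexes, indexed by all of ℤ; finiteness
of the filtration (`⊤` at some index `m`, `⊥` at some index `M`) is imposed
separately in the theorem. -/
structure FilteredComplex where
  /-- the space in each (cohomological) degree -/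
  X : ℤ → Type
  [acg : ∀ n, AddCommGroup (X n)]
  [mod : ∀ n, Module ℚ (X n)]
  /-- the differential, of degree `+1` -/
  d : ∀ n, X n →ₗ[ℚ] X (n + 1)
  dsq : ∀ n, (d (n + 1)).comp (d n) = 0
  /-- the filtration: a decreasing family of degreewise subspaces -/
  F : ℤ → ∀ n, Submodule ℚ (X n)
  Fmono : ∀ i j : ℤ, i ≤ j → ∀ n, F j n ≤ F i n
  /-- each `F i` is a subcomplex: it is preserved by the differential -/
  Fd : ∀ i n, ∀ x ∈ F i n, d n x ∈ F i (n + 1)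

attribute [instance] FilteredComplex.acg FilteredComplex.mod

namespace FilteredComplex

/-- Cocycles (in degree `n+1`). -/
def Zc (C : FilteredComplex) (n : ℤ) : Submodule ℚ (C.X (n + 1)) :=
  LinearMap.ker (C.d (n + 1))

/-- Coboundaries (in degree `n+1`). -/
def Bc (C : FilteredComplex) (n : ℤ) : Submodule ℚ (C.X (n + 1)) :=
  LinearMap.range (C.d n)

/-- Cohomology of `C` in degree `n+1`. -/
abbrev Hc (C : FilteredComplex) (n : ℤ) :=
  ↥(C.Zc n) ⧸ (C.Bc n).comap (C.Zc n).subtype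

/-- The induced filtration on cohomology: `Ssub i` is the subspace of classes
admitting a representative cocycle lying in `F i`. -/
def Ssub (C : FilteredComplex) (i n : ℤ) : Submodule ℚ (C.Hc n) :=
  Submodule.map ((C.Bc n).comap (C.Zc n).subtype).mkQ
    ((C.F i (n + 1)).comap (C.Zc n).subtype)

/-- Transport along an equality of degrees. -/
def cE (C : FilteredComplex) {a b : ℤ} (h : a = b) : C.X a ≃ₗ[ℚ] C.X b := by
  subst h; exact LinearEquiv.refl ℚ _

/-- The differential of the dual complex `C*`: the space of `C*` in degree `n`
is `(C.X (−n))*`, and the differential `(C.X (−n))* → (C.X (−(n+1)))*` is the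
transpose of the differential `C.X (−(n+1)) → C.X (−n)` of `C`. -/
def dstar (C : FilteredComplex) (n : ℤ) :
    Module.Dual ℚ (C.X (-n)) →ₗ[ℚ] Module.Dual ℚ (C.X (-(n + 1))) :=
  LinearMap.dualMap
    ((C.cE (show -(n + 1) + 1 = -n by ring)).toLinearMap.comp (C.d (-(n + 1))))

/-- The filtration on the dual complex: `G_j` in degree `n` consists of the
functionals vanishing on `F (1−j)`. -/
def Gsub (C : FilteredComplex) (j n : ℤ) :
    Submodule ℚ (Module.Dual ℚ (C.X (-n))) :=
  (C.F (1 - j) (-n)).dualAnnihilator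

/-- Cocycles of the dual complex (in degree `n+1`). -/
def Zs (C : FilteredComplex) (n : ℤ) :
    Submodule ℚ (Module.Dual ℚ (C.X (-(n + 1)))) :=
  LinearMap.ker (C.dstar (n + 1))

/-- Coboundaries of the dual complex (in degree `n+1`). -/
def Bs (C : FilteredComplex) (n : ℤ) :
    Submodule ℚ (Module.Dual ℚ (C.X (-(n + 1)))) :=
  LinearMap.range (C.dstar n)

/-- Cohomology of the dual complex `C*` in degree `n+1`. -/
abbrev Hs (C : FilteredComplex) (n : ℤ) :=
  ↥(C.Zs n) ⧸ (C.Bs n).comap (C.Zs n).subtype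

/-- The filtration induced by `G` on the cohomology of the dual complex:
classes with a representative cocycle lying in `G j`. -/
def Tsub (C : FilteredComplex) (j n : ℤ) : Submodule ℚ (C.Hs n) :=
  Submodule.map ((C.Bs n).comap (C.Zs n).subtype).mkQ
    ((C.Gsub j (n + 1)).comap (C.Zs n).subtype)

end FilteredComplex

namespace DualAux
open Module

variable {V W : Type} [AddCommGroup V] [Module ℚ V] [FiniteDimensional ℚ V]
  [AddCommGroup W] [Module ℚ W]

lemma finrank_comap_sub (P Q : Submodule ℚ V) (h : Q ≤ P) :
    finrank ℚ (Q.comap P.subtype) = finrank ℚ Q :=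
  (Submodule.comapSubtypeEquivOfLe h).finrank_eq

lemma finrank_map_add (f : V →ₗ[ℚ] W) (P : Submodule ℚ V) (h : LinearMap.ker f ≤ P) :
    finrank ℚ (P.map f) + finrank ℚ (LinearMap.ker f) = finrank ℚ P := by
  have := LinearMap.finrank_range_add_finrank_ker (f.domRestrict P)
  rw [LinearMap.range_domRestrict, LinearMap.ker_domRestrict] at this
  rw [← this, ← finrank_comap_sub P _ h]

lemma finrank_gr (P Q : Submodule ℚ V) (h : Q ≤ P) :
    finrank ℚ (↥P ⧸ Q.comap P.subtype) + finrank ℚ Q = finrank ℚ P := by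
  rw [← finrank_comap_sub P Q h]
  exact Submodule.finrank_quotient_add_finrank _

lemma finrank_ind (Z B F : Submodule ℚ V) (h : B ≤ Z) :
    finrank ℚ (Submodule.map (B.comap Z.subtype).mkQ (F.comap Z.subtype)) + finrank ℚ B
      = finrank ℚ ↥((F ⊓ Z) ⊔ B) := by
  have h1 : Submodule.map (B.comap Z.subtype).mkQ (F.comap Z.subtype)
      = Submodule.map (B.comap Z.subtype).mkQ (F.comap Z.subtype ⊔ B.comap Z.subtype) := by
    rw [Submodule.map_sup, Submodule.mkQ_map_self, sup_bot_eq]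
  have h2 := finrank_map_add (B.comap Z.subtype).mkQ (F.comap Z.subtype ⊔ B.comap Z.subtype)
    (by rw [Submodule.ker_mkQ]; exact le_sup_right)
  rw [Submodule.ker_mkQ, finrank_comap_sub Z B h] at h2
  rw [h1, h2, ← Submodule.finrank_map_subtype_eq, Submodule.map_sup,
    Submodule.map_comap_subtype, Submodule.map_comap_subtype, inf_comm Z F, inf_eq_right.2 h]

lemma ann_eq (Z B F : Submodule ℚ V) (h : B ≤ Z) :
    (F.dualAnnihilator ⊓ B.dualAnnihilator) ⊔ Z.dualAnnihilator
      = ((F ⊓ Z) ⊔ B).dualAnnihilator := by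
  rw [← Submodule.dualAnnihilator_sup_eq, ← Subspace.dualAnnihilator_inf_eq,
    sup_comm F B, sup_inf_assoc_of_le F h, sup_comm]

/-- Numerical version of the duality of graded pieces in a single degree. -/
lemma main_num (Z B F F' : Submodule ℚ V) (h : B ≤ Z) (hF : F' ≤ F)
    {t t' s s' : ℕ}
    (hs : s + finrank ℚ B = finrank ℚ ↥((F ⊓ Z) ⊔ B))
    (hs' : s' + finrank ℚ B = finrank ℚ ↥((F' ⊓ Z) ⊔ B))
    (ht : t + finrank ℚ Z.dualAnnihilator
      = finrank ℚ ↥((F'.dualAnnihilator ⊓ B.dualAnnihilator) ⊔ Z.dualAnnihilator))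
    (ht' : t' + finrank ℚ Z.dualAnnihilator
      = finrank ℚ ↥((F.dualAnnihilator ⊓ B.dualAnnihilator) ⊔ Z.dualAnnihilator)) :
    t + s' = t' + s := by
  rw [ann_eq Z B _ h] at ht ht'
  have e1 := Subspace.finrank_add_finrank_dualAnnihilator_eq ((F ⊓ Z) ⊔ B)
  have e2 := Subspace.finrank_add_finrank_dualAnnihilator_eq ((F' ⊓ Z) ⊔ B)
  omega

lemma cE_F (C : FilteredComplex) {a b : ℤ} (h : a = b) (i : ℤ) (x : C.X a)
    (hx : x ∈ C.F i a) : C.cE h x ∈ C.F i b := by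
  subst h; exact hx

lemma range_le (C : FilteredComplex) (l k : ℤ) (h : l + 1 = k) :
    LinearMap.range ((C.cE h).toLinearMap.comp (C.d l)) ≤ LinearMap.ker (C.d k) := by
  subst h
  rintro _ ⟨x, rfl⟩
  exact LinearMap.congr_fun (C.dsq l) x

lemma S_fin (C : FilteredComplex) (hfin : ∀ n, FiniteDimensional ℚ (C.X n)) (i l l' k : ℤ)
    (hl : l = l') (h : l' + 1 = k) :
    finrank ℚ (C.Ssub i l) + finrank ℚ (LinearMap.range ((C.cE h).toLinearMap.comp (C.d l')))
      = finrank ℚ ↥((C.F i k ⊓ LinearMap.ker (C.d k)) ⊔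
          LinearMap.range ((C.cE h).toLinearMap.comp (C.d l'))) := by
  subst hl; subst h
  exact finrank_ind (C.Zc l) (C.Bc l) (C.F i (l + 1)) (range_le C l _ rfl)

lemma Zs_eq (C : FilteredComplex) (n : ℤ) (h : -(n + 1 + 1) + 1 = -(n + 1)) :
    C.Zs n = (LinearMap.range
      ((C.cE h).toLinearMap.comp (C.d (-(n + 1 + 1))))).dualAnnihilator :=
  LinearMap.ker_dualMap_eq_dualAnnihilator_range _

lemma Bs_eq (C : FilteredComplex) (n : ℤ) :
    C.Bs n = (LinearMap.ker (C.d (-(n + 1)))).dualAnnihilator := by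
  refine (LinearMap.range_dualMap_eq_dualAnnihilator_ker _).trans ?_
  rw [LinearEquiv.ker_comp]

lemma T_fin (C : FilteredComplex) (hfin : ∀ n, FiniteDimensional ℚ (C.X n)) (j n : ℤ)
    (h : -(n + 1 + 1) + 1 = -(n + 1)) :
    finrank ℚ (C.Tsub j n) + finrank ℚ (LinearMap.ker (C.d (-(n + 1)))).dualAnnihilator
      = finrank ℚ ↥(((C.F (1 - j) (-(n + 1))).dualAnnihilator ⊓
          (LinearMap.range
            ((C.cE h).toLinearMap.comp (C.d (-(n + 1 + 1))))).dualAnnihilator) ⊔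
          (LinearMap.ker (C.d (-(n + 1)))).dualAnnihilator) := by
  rw [← Zs_eq, ← Bs_eq]
  refine finrank_ind (C.Zs n) (C.Bs n) (C.Gsub j (n + 1)) ?_
  rw [Zs_eq C n h, Bs_eq]
  exact Submodule.dualAnnihilator_anti (range_le C _ _ h)

end DualAux

/-- Let `C` be a cochain complex of finite-dimensional
ℚ-vector spaces, nonzero in only finitely many degrees, with a finite
decreasing filtration by subcomplexes (`F m = ⊤`, `F M = ⊥`).  Filter the dual
complex `C*` by `G_j = {φ : φ` vanishes on `F (1−j)}`.  Then:
(1) each `G_j` is a subcomplex of `C*`, the family `G_j` is a finite decreasing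
filtration of `C*` with largest term `C*` (at `j = 1−M`) and smallest term `0`
(at `j = 1−m`); and
(2) for every `i` and every degree, the associated graded piece
`T_{−i}/T_{−i+1}` of the induced filtration on `H(C*)` is isomorphic as a
ℚ-vector space to the dual of the associated graded piece `S_i/S_{i+1}` of the
induced filtration on `H(C)` in the corresponding dual degree. -/
theorem dual_filtered_complex
    (C : FilteredComplex) (m M : ℤ)
    (hfin : ∀ n, FiniteDimensional ℚ (C.X n))
    (hbdd : ∃ N : ℤ, ∀ n : ℤ, N ≤ |n| → Subsingleton (C.X n))
    (hm : ∀ n, C.F m n = ⊤) (hM : ∀ n, C.F M n = ⊥) :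
    -- (1) `G` is a finite decreasing filtration of `C*` by subcomplexes
    ((∀ j n : ℤ, ∀ φ ∈ C.Gsub j n, C.dstar n φ ∈ C.Gsub j (n + 1)) ∧
     (∀ j j' : ℤ, j ≤ j' → ∀ n : ℤ, C.Gsub j' n ≤ C.Gsub j n) ∧
     (∀ n : ℤ, C.Gsub (1 - M) n = ⊤) ∧
     (∀ n : ℤ, C.Gsub (1 - m) n = ⊥)) ∧
    -- (2) associated graded pieces of `H(C*)` are dual to those of `H(C)`:
    -- `Hs C n` is `H^{n+1}(C*)`, whose dual degree corresponds to
    -- `H^{-(n+1)}(C) = Hc C (-n-2)`.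
    (∀ i n : ℤ, Nonempty (
      (↥(C.Tsub (-i) n) ⧸ (C.Tsub (-i + 1) n).comap (C.Tsub (-i) n).subtype)
        ≃ₗ[ℚ]
      Module.Dual ℚ
        (↥(C.Ssub i (-n - 2)) ⧸
          (C.Ssub (i + 1) (-n - 2)).comap (C.Ssub i (-n - 2)).subtype))) := by
  have hG : ∀ j j' : ℤ, j ≤ j' → ∀ n : ℤ, C.Gsub j' n ≤ C.Gsub j n := fun j j' hj n =>
    Submodule.dualAnnihilator_anti (C.Fmono _ _ (by omega) _)
  refine ⟨⟨?_, hG, ?_, ?_⟩, ?_⟩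
  · intro j n φ hφ
    refine (Submodule.mem_dualAnnihilator _).2 fun x hx => ?_
    exact (Submodule.mem_dualAnnihilator φ).1 hφ _
      (DualAux.cE_F C _ _ _ (C.Fd _ _ x hx))
  · intro n
    unfold FilteredComplex.Gsub
    rw [sub_sub_cancel, hM, Submodule.dualAnnihilator_bot]
  · intro n
    unfold FilteredComplex.Gsub
    rw [sub_sub_cancel, hm, Submodule.dualAnnihilator_top]
  · intro i n
    have hk : -(n + 1 + 1) + 1 = -(n + 1) := by ring
    have hl : -n - 2 = -(n + 1 + 1) := by ring
    have hF := C.Fmono i (i + 1) (by omega) (-(n + 1))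
    have t1 := DualAux.T_fin C hfin (-i) n hk
    have t2 := DualAux.T_fin C hfin (-i + 1) n hk
    rw [show 1 - -i = i + 1 by ring] at t1
    rw [show 1 - (-i + 1) = i by ring] at t2
    have key := DualAux.main_num _ _ _ _ (DualAux.range_le C _ _ hk) hF
      (DualAux.S_fin C hfin i _ _ _ hl hk) (DualAux.S_fin C hfin (i + 1) _ _ _ hl hk) t1 t2
    have g1 := DualAux.finrank_gr (C.Tsub (-i) n) (C.Tsub (-i + 1) n)
      (Submodule.map_mono (Submodule.comap_mono (hG _ _ (by omega) _)))
    have g2 := DualAux.finrank_gr (C.Ssub i (-n - 2)) (C.Ssub (i + 1) (-n - 2))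
      (Submodule.map_mono (Submodule.comap_mono (C.Fmono _ _ (by omega) _)))
    refine ⟨LinearEquiv.ofFinrankEq _ _ ?_⟩
    rw [Subspace.dual_finrank_eq]
    omega
end
end
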